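/- Assume p is odd and e ≥ 1. Let a ∈ V_R with a ≠ 0 and set b := f_R(a,a)/2. Define u(x) := x^p − a^{p−1}x and Δ_0(x) := −(x/a)·((b/a)x − f_R(x,a)). Then there exists a (unique) additive polynomial R_1(u) = Σ_{i=0}^{e−1} c_i u^{p^i} ∈ F̄[u] of degree p^{e−1} such that x·R(x) = u(x)·R_1(u(x)) + Δ_0(x)^p − Δ_0(x) as polynomials in F̄[x]; moreover its leading coefficient is c_{e−1} = −a_e/a^{p−1} if e > 1, and c_{e−1} = −a_e/(2a^{p−1}) if e = 1. -/

import Mathlib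

open Finset Polynomial

/-- The additive polynomial `R(x) = ∑_{i=0}^e a_i x^{p^i}`, evaluated in any commutative ring. -/
def Rgen {A : Type*} [CommRing A] (p e : ℕ) (a : ℕ → A) (x : A) : A :=
  ∑ i ∈ Finset.range (e + 1), a i * x ^ p ^ i

/-- `E_R(x) = R(x)^{p^e} + ∑_{i=0}^e (a_i x)^{p^{e-i}}`. -/
def Egen {A : Type*} [CommRing A] (p e : ℕ) (a : ℕ → A) (x : A) : A :=
  Rgen p e a x ^ p ^ e + ∑ i ∈ Finset.range (e + 1), (a i * x) ^ p ^ (e - i)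

/-- `f_R(x,y) = -∑_{i=0}^{e-1} ( ∑_{j=0}^{e-i-1} (a_i x^{p^i} y)^{p^j} + (x R(y))^{p^i} )`. -/
def fgen {A : Type*} [CommRing A] (p e : ℕ) (a : ℕ → A) (x y : A) : A :=
  -∑ i ∈ Finset.range e,
    ((∑ j ∈ Finset.range (e - i), (a i * x ^ p ^ i * y) ^ p ^ j) + (x * Rgen p e a y) ^ p ^ i)

/-- The set `H_R = {(a,b) : E_R(a) = 0, b^p - b = a R(a)}`. -/
def Hset {K : Type*} [CommRing K] (p e : ℕ) (a : ℕ → K) : Set (K × K) :=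
  {h | Egen p e a h.1 = 0 ∧ h.2 ^ p - h.2 = h.1 * Rgen p e a h.1}

/-- The group law `(a,b)·(a',b') = (a+a', b+b'+f_R(a,a'))` on `H_R`. -/
def Hmul {K : Type*} [CommRing K] (p e : ℕ) (a : ℕ → K) (h h' : K × K) : K × K :=
  (h.1 + h'.1, h.2 + h'.2 + fgen p e a h.1 h'.1)

/-!
Put `t = x / α`, `g(x) = f_R(x, α)` and `β = f_R(α, α) / 2`. Telescoping `f_R(x, y)^p - f_R(x, y)`
and using `E_R(α) = 0` gives `g^p - g = α R(x) + x R(α)`, and at `x = α` this is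
`β^p - β = α R(α)` because `2` is invertible. Since `u = α^p (t^p - t)` and `Δ₀ = -t (β t - g)`,
it follows that `x R(x) - Δ₀^p + Δ₀ = (t^p - t) (β^p (t^p + t) - g^p)`. The second factor is an
additive polynomial which vanishes at `α`, as `g(α) = 2β`. Any such polynomial is an additive
polynomial in `u`: subtracting multiples of `u^{p^i}` for decreasing `i` removes all terms but a
multiple of `x`, which has to be zero. The leading coefficient is the coefficient of `x^{p^e}`;
for `e = 1` the term `β^p t^p` also contributes to it, and there `2 β^p = a_1 α^{p+1}`.
-/

section ArtinSchreier

variable {A : Type*} [CommRing A] {p₀ n p : ℕ} [ExpChar A p₀]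

theorem sum_pow_pow_pow_sub_sum (hp : p = p₀ ^ n) (z : A) (m : ℕ) :
    (∑ j ∈ range m, z ^ p ^ j) ^ p - ∑ j ∈ range m, z ^ p ^ j = z ^ p ^ m - z := by
  have hpow : (∑ j ∈ range m, z ^ p ^ j) ^ p = ∑ j ∈ range m, z ^ p ^ (j + 1) := by
    simp only [pow_succ, pow_mul, hp, sum_pow_char_pow]
  rw [hpow, ← sum_sub_distrib, sum_range_sub (fun j => z ^ p ^ j), pow_zero, pow_one]

theorem fgen_pow_sub_fgen (hp : p = p₀ ^ n) (e : ℕ) (a : ℕ → A) (x y : A) :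
    fgen p e a x y ^ p - fgen p e a x y =
      y * Rgen p e a x + x * Rgen p e a y - x ^ p ^ e * Egen p e a y := by
  set S : ℕ → A := fun i => ∑ j ∈ range (e - i), (a i * x ^ p ^ i * y) ^ p ^ j
  set T : A := ∑ i ∈ range e, (x * Rgen p e a y) ^ p ^ i
  have hf : fgen p e a x y = 0 - ∑ i ∈ range e, S i - T := by
    rw [fgen, sum_add_distrib]; ring
  have hfp : fgen p e a x y ^ p = 0 - ∑ i ∈ range e, S i ^ p - T ^ p := by
    rw [hf, hp, sub_pow_expChar_pow, sub_pow_expChar_pow, sum_pow_char_pow,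
      zero_pow (expChar_pow_pos A p₀ n).ne']
  have hS : ∑ i ∈ range e, S i ^ p - ∑ i ∈ range e, S i =
      x ^ p ^ e * ∑ i ∈ range e, (a i * y) ^ p ^ (e - i) -
        y * ∑ i ∈ range e, a i * x ^ p ^ i := by
    rw [← sum_sub_distrib, mul_sum, mul_sum, ← sum_sub_distrib]
    refine sum_congr rfl fun i hi => ?_
    rw [sum_pow_pow_pow_sub_sum hp, ← Nat.add_sub_of_le (mem_range.1 hi).le, pow_add,
      Nat.add_sub_cancel_left]
    ring
  have hT : T ^ p - T = x ^ p ^ e * Rgen p e a y ^ p ^ e - x * Rgen p e a y := by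
    rw [sum_pow_pow_pow_sub_sum hp, mul_pow]
  have hR : Rgen p e a x = ∑ i ∈ range e, a i * x ^ p ^ i + a e * x ^ p ^ e :=
    sum_range_succ ..
  rw [hfp, hf, hR, Egen, sum_range_succ, Nat.sub_self, pow_zero, pow_one]
  linear_combination -hS - hT

theorem fgen_one_pow (hp : p = p₀ ^ n) (a : ℕ → A) (x y : A) :
    fgen p 1 a x y ^ p = x ^ p * (a 1 * y - Egen p 1 a y) := by
  have hf : fgen p 1 a x y = x * (0 - (a 0 * y + Rgen p 1 a y)) := by
    rw [fgen, sum_range_one, Nat.sub_zero, sum_range_one]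
    ring
  have hE : Egen p 1 a y = Rgen p 1 a y ^ p + ((a 0 * y) ^ p + a 1 * y) := by
    simp [Egen, sum_range_succ]
  rw [hf, hE, hp, mul_pow, sub_pow_expChar_pow, add_pow_expChar_pow,
    zero_pow (expChar_pow_pos A p₀ n).ne']
  ring

theorem mul_eq_add_pow_sub (hp : p = p₀ ^ n) {α β t g r ρ : A}
    (hg : g ^ p - g = α * r + α * t * ρ) (hβ : β ^ p - β = α * ρ) :
    α * t * r = (t ^ p - t) * (β ^ p * (t ^ p + t) - g ^ p) +
      (-t * (β * t - g)) ^ p - -t * (β * t - g) := by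
  have hΔ : (-t * (β * t - g)) ^ p = t ^ p * (g ^ p - β ^ p * t ^ p) := by
    rw [neg_mul, ← mul_neg, neg_sub, hp, mul_pow, sub_pow_expChar_pow, mul_pow]
  rw [hΔ]
  linear_combination -t * hg + t ^ 2 * hβ

theorem mk_half_fgen_mem_Hset {K : Type*} [Field K] [ExpChar K p₀] (hp : p = p₀ ^ n)
    (h2 : (2 : K) ≠ 0) {e : ℕ} {a : ℕ → K} {α : K} (hE : Egen p e a α = 0) :
    (α, fgen p e a α α / 2) ∈ Hset p e a := by
  set β := fgen p e a α α / 2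
  have hβ : fgen p e a α α = β + β := by rw [← two_mul, mul_div_cancel₀ _ h2]
  have hf := fgen_pow_sub_fgen hp e a α α
  have hββ : (β + β) ^ p = β ^ p + β ^ p := by rw [hp, add_pow_expChar_pow]
  rw [hE, hβ, hββ] at hf
  exact ⟨hE, mul_left_cancel₀ h2 (by linear_combination hf)⟩

end ArtinSchreier

section Map

variable {A B : Type*} [CommRing A] [CommRing B] (φ : A →+* B) (p e : ℕ) (a : ℕ → A)

theorem map_Rgen (x : A) : φ (Rgen p e a x) = Rgen p e (fun i => φ (a i)) (φ x) := by
  simp [Rgen]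

theorem map_Egen (x : A) : φ (Egen p e a x) = Egen p e (fun i => φ (a i)) (φ x) := by
  simp [Egen, map_Rgen]

theorem map_fgen (x y : A) :
    φ (fgen p e a x y) = fgen p e (fun i => φ (a i)) (φ x) (φ y) := by
  simp [fgen, map_Rgen]

end Map

section FrobeniusSpan

variable {R : Type*} [CommRing R] {p : ℕ}

/-- The polynomials `L(f)` with `L = ∑_{i < m} c_i X^{p^i}` additive of degree less than `p^m`.
For `f = X` these are the additive polynomials themselves; membership for another `f` says that
a polynomial descends along `x ↦ f(x)` to an additive polynomial. -/
noncomputable def frobeniusSpan (p : ℕ) (f : R[X]) (m : ℕ) : Submodule R R[X] :=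
  Submodule.span R (Set.range fun i : Fin m => f ^ p ^ (i : ℕ))

theorem mem_frobeniusSpan {f P : R[X]} {m : ℕ} :
    P ∈ frobeniusSpan p f m ↔ ∃ c : Fin m → R, ∑ i, C (c i) * f ^ p ^ (i : ℕ) = P := by
  simp only [frobeniusSpan, Submodule.mem_span_range_iff_exists_fun, smul_eq_C_mul]

theorem C_mul_pow_mem_frobeniusSpan (f : R[X]) (c : R) {i m : ℕ} (hi : i < m) :
    C c * f ^ p ^ i ∈ frobeniusSpan p f m := by
  rw [← smul_eq_C_mul]
  exact Submodule.smul_mem _ _ (Submodule.subset_span ⟨⟨i, hi⟩, rfl⟩)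

theorem mem_frobeniusSpan_succ {f P : R[X]} {m : ℕ} :
    P ∈ frobeniusSpan p f (m + 1) ↔ ∃ c, P - C c * f ^ p ^ m ∈ frobeniusSpan p f m := by
  simp only [mem_frobeniusSpan]
  constructor
  · rintro ⟨c, rfl⟩
    exact ⟨c (Fin.last m), fun i => c i.castSucc, by simp [Fin.sum_univ_castSucc]⟩
  · rintro ⟨c, d, hd⟩
    exact ⟨Fin.snoc (α := fun _ => R) d c, by simp [Fin.sum_univ_castSucc, hd]⟩

theorem pow_mem_frobeniusSpan {p₀ n : ℕ} [ExpChar R p₀] (hp : p = p₀ ^ n) {f P : R[X]} {m : ℕ}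
    (hP : P ∈ frobeniusSpan p f m) : P ^ p ∈ frobeniusSpan p f (m + 1) := by
  obtain ⟨c, rfl⟩ := mem_frobeniusSpan.1 hP
  have hpow : (∑ i, C (c i) * f ^ p ^ (i : ℕ)) ^ p =
      ∑ i, C (c i ^ p) * f ^ p ^ ((i : ℕ) + 1) := by
    simp only [hp, sum_pow_char_pow, mul_pow, C_pow, ← pow_mul, pow_succ]
  rw [hpow]
  exact sum_mem fun i _ => C_mul_pow_mem_frobeniusSpan f _ (by omega)

theorem coeff_eq_zero_of_mem_frobeniusSpan (hp : 1 < p) {f P : R[X]} (hf : f.natDegree ≠ 0)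
    {m : ℕ} (hP : P ∈ frobeniusSpan p f m) : P.coeff (p ^ m * f.natDegree) = 0 := by
  obtain ⟨c, rfl⟩ := mem_frobeniusSpan.1 hP
  rw [finsetSum_coeff]
  refine sum_eq_zero fun i _ => ?_
  have hdeg : (f ^ p ^ (i : ℕ)).natDegree < p ^ m * f.natDegree :=
    natDegree_pow_le.trans_lt (by gcongr; exact i.2)
  rw [coeff_C_mul, coeff_eq_zero_of_natDegree_lt hdeg, mul_zero]

theorem coeff_sum_C_mul_pow_pow (hp : 1 < p) {f : R[X]} (hf : f.Monic) (hf0 : f.natDegree ≠ 0)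
    {m : ℕ} (c : Fin (m + 1) → R) :
    (∑ i, C (c i) * f ^ p ^ (i : ℕ)).coeff (p ^ m * f.natDegree) = c (Fin.last m) := by
  have hlow : ∑ i : Fin m, C (c i.castSucc) * f ^ p ^ (i : ℕ) ∈ frobeniusSpan p f m :=
    mem_frobeniusSpan.2 ⟨_, rfl⟩
  simp [Fin.sum_univ_castSucc, coeff_eq_zero_of_mem_frobeniusSpan hp hf0 hlow,
    coeff_pow_mul_natDegree, hf.leadingCoeff]

theorem linearIndependent_pow_pow (hp : 1 < p) {f : R[X]} (hf : f.Monic)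
    (hf0 : f.natDegree ≠ 0) (m : ℕ) :
    LinearIndependent R fun i : Fin m => f ^ p ^ (i : ℕ) := by
  have hinj : Function.Injective (aeval f : R[X] →ₐ[R] R[X]) :=
    transcendental_iff_injective.1 (f.transcendental hf0 (by simp [hf.leadingCoeff]))
  have hpow : LinearIndependent R fun k : ℕ => f ^ k := by
    simpa [Function.comp_def] using
      (basisMonomials R).linearIndependent.map_injOn (aeval f).toLinearMap hinj.injOn
  exact hpow.comp (fun i : Fin m => p ^ (i : ℕ))
    ((Nat.pow_right_injective hp).comp Fin.val_injective)

theorem existsUnique_sum_eq_of_mem_frobeniusSpan (hp : 1 < p) {f P : R[X]} (hf : f.Monic)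
    (hf0 : f.natDegree ≠ 0) {m : ℕ} (hP : P ∈ frobeniusSpan p f m) :
    ∃! c : Fin m → R, ∑ i, C (c i) * f ^ p ^ (i : ℕ) = P := by
  obtain ⟨c, hc⟩ := mem_frobeniusSpan.1 hP
  refine ⟨c, hc, fun d hd =>
    (linearIndependent_pow_pow hp hf hf0 m).fintypeLinearCombination_injective ?_⟩
  simpa only [Fintype.linearCombination_apply, smul_eq_C_mul] using hd.trans hc.symm

end FrobeniusSpan

section LineQuotient

variable {R : Type*} [CommRing R] {p : ℕ}

/-- The quotient map `u(x) = x^p - α^{p-1} x` by the line spanned by `α` over the field with `p`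
elements. -/
noncomputable def lineQuotient (p : ℕ) (α : R) : R[X] :=
  X ^ p - C (α ^ (p - 1)) * X

theorem eval_lineQuotient_self (hp : p ≠ 0) (α : R) : (lineQuotient p α).eval α = 0 := by
  simp [lineQuotient, pow_sub_one_mul hp]

theorem monic_lineQuotient (hp : 1 < p) (α : R) : (lineQuotient p α).Monic :=
  monic_X_pow_sub ((degree_C_mul_X_le _).trans_lt (by exact_mod_cast hp))

theorem natDegree_lineQuotient [Nontrivial R] (hp : 1 < p) (α : R) :
    (lineQuotient p α).natDegree = p := by
  have hlow : (C (α ^ (p - 1)) * X : R[X]).natDegree < (X ^ p : R[X]).natDegree := by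
    rw [natDegree_X_pow]
    exact ((natDegree_C_mul_le _ _).trans natDegree_X_le).trans_lt hp
  rw [lineQuotient, natDegree_sub_eq_left_of_natDegree_lt hlow, natDegree_X_pow]

theorem X_pow_sub_lineQuotient_pow_mem_frobeniusSpan {p₀ n : ℕ} [ExpChar R p₀]
    (hp : p = p₀ ^ n) (α : R) (i : ℕ) :
    X ^ p ^ (i + 1) - lineQuotient p α ^ p ^ i ∈ frobeniusSpan p X (i + 1) := by
  have hpow : lineQuotient p α ^ p ^ i =
      X ^ p ^ (i + 1) - (C (α ^ (p - 1)) * X) ^ p ^ i := by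
    have hpi : p ^ i = p₀ ^ (n * i) := by rw [hp, pow_mul]
    rw [lineQuotient, pow_succ', pow_mul, hpi, sub_pow_expChar_pow]
  rw [hpow, sub_sub_cancel, mul_pow, ← C_pow]
  exact C_mul_pow_mem_frobeniusSpan X _ i.lt_succ_self

theorem mem_frobeniusSpan_lineQuotient_of_eval_eq_zero [NoZeroDivisors R] {p₀ n : ℕ}
    [ExpChar R p₀] (hp : p = p₀ ^ n) {α : R} (hα : α ≠ 0) {P : R[X]} {m : ℕ}
    (hP : P ∈ frobeniusSpan p X (m + 1)) (hPα : P.eval α = 0) :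
    P ∈ frobeniusSpan p (lineQuotient p α) m := by
  have hp0 : p ≠ 0 := hp ▸ (expChar_pow_pos R p₀ n).ne'
  induction m generalizing P with
  | zero =>
    obtain ⟨c, rfl⟩ := mem_frobeniusSpan.1 hP
    have hc : c 0 = 0 := by simpa [hα] using hPα
    simp [hc]
  | succ m ih =>
    obtain ⟨c, hc⟩ := mem_frobeniusSpan_succ.1 hP
    set u := lineQuotient p α with hu
    have hlow : P - C c * u ^ p ^ m ∈ frobeniusSpan p X (m + 1) := by
      have hX := Submodule.smul_mem _ c (X_pow_sub_lineQuotient_pow_mem_frobeniusSpan hp α m)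
      convert add_mem hc hX using 1
      rw [smul_eq_C_mul]
      ring
    have heval : (P - C c * u ^ p ^ m).eval α = 0 := by
      simp [hPα, hu, eval_lineQuotient_self hp0, hp0]
    exact mem_frobeniusSpan_succ.2 ⟨c, ih hlow heval⟩

end LineQuotient

section AdditivePolynomial

variable {R : Type*} [CommRing R] {p : ℕ}

theorem coeff_Rgen (hp : 1 < p) (e : ℕ) (a : ℕ → R) :
    (Rgen p e (fun i => C (a i)) X).coeff (p ^ e) = a e := by
  simp [Rgen, coeff_X_pow, (Nat.pow_right_injective hp).eq_iff]

theorem fgen_mem_frobeniusSpan (p e : ℕ) (a : ℕ → R) (α : R) :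
    fgen p e (fun i => C (a i)) X (C α) ∈ frobeniusSpan p X e := by
  refine neg_mem (sum_mem fun i hi => add_mem (sum_mem fun j hj => ?_) ?_)
  · have hij : (C (a i) * X ^ p ^ i * C α) ^ p ^ j = C ((a i * α) ^ p ^ j) * X ^ p ^ (i + j) := by
      simp only [C_pow, C_mul, pow_add p, pow_mul]
      ring
    rw [hij]
    have := mem_range.1 hj
    exact C_mul_pow_mem_frobeniusSpan X _ (by omega)
  · rw [← map_Rgen C, mul_comm, mul_pow, ← C_pow]
    exact C_mul_pow_mem_frobeniusSpan X _ (mem_range.1 hi)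

theorem fgen_X_C_pow_sub_fgen_X_C {p₀ n : ℕ} [ExpChar R p₀] (hp : p = p₀ ^ n) {e : ℕ}
    {a : ℕ → R} {α : R} (hE : Egen p e a α = 0) :
    fgen p e (fun i => C (a i)) X (C α) ^ p - fgen p e (fun i => C (a i)) X (C α) =
      C α * Rgen p e (fun i => C (a i)) X + X * C (Rgen p e a α) := by
  rw [fgen_pow_sub_fgen hp, ← map_Egen C, hE, ← map_Rgen C]
  simp

theorem coeff_fgen_X_C_pow {p₀ n : ℕ} [ExpChar R p₀] (hp : p = p₀ ^ n) (hp1 : 1 < p) {e : ℕ}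
    (he : 1 ≤ e) {a : ℕ → R} {α : R} (hE : Egen p e a α = 0) :
    (fgen p e (fun i => C (a i)) X (C α) ^ p).coeff (p ^ e) = α * a e := by
  nontriviality R
  have hg := coeff_eq_zero_of_mem_frobeniusSpan hp1 (by simp) (fgen_mem_frobeniusSpan p e a α)
  have hpe : p ^ e ≠ 1 := (Nat.one_lt_pow (by omega) hp1).ne'
  rw [natDegree_X, mul_one] at hg
  rw [sub_eq_iff_eq_add.1 (fgen_X_C_pow_sub_fgen_X_C hp hE), coeff_add, hg, coeff_add, coeff_C_mul,
    coeff_Rgen hp1, coeff_mul_C, coeff_X_of_ne_one hpe]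
  ring

end AdditivePolynomial

section Quotient

variable {K : Type*} [Field K] {p₀ n p : ℕ} [ExpChar K p₀] {e : ℕ} {a : ℕ → K} {α β : K}

/-- `R₁(u(x))` as a polynomial in `x`, where `u = lineQuotient p α`. With `t = x/α` and
`g = f_R(x,α)` one has `u = α^p (t^p - t)` and `Δ₀ = -t(βt - g)`, and dividing
`xR(x) - Δ₀^p + Δ₀` by `u` gives `α^{-p} (β^p (t^p + t) - g^p)`. -/
noncomputable def quotientPoly (p e : ℕ) (a : ℕ → K) (α β : K) : K[X] :=
  C (α ^ p)⁻¹ * (C (β ^ p) * ((C α⁻¹ * X) ^ p + C α⁻¹ * X) -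
    fgen p e (fun i => C (a i)) X (C α) ^ p)

theorem X_mul_Rgen_eq (hp : p = p₀ ^ n) (hα : α ≠ 0) (hαβ : (α, β) ∈ Hset p e a) :
    X * Rgen p e (fun i => C (a i)) X = lineQuotient p α * quotientPoly p e a α β +
      (-(C α⁻¹ * X) * (C (β / α) * X - fgen p e (fun i => C (a i)) X (C α))) ^ p -
      -(C α⁻¹ * X) * (C (β / α) * X - fgen p e (fun i => C (a i)) X (C α)) := by
  obtain ⟨hE, hβ⟩ := hαβ
  have hp0 : p ≠ 0 := hp ▸ (expChar_pow_pos K p₀ n).ne'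
  set t : K[X] := C α⁻¹ * X with ht
  have hαt : C α * t = X := by rw [ht, ← mul_assoc, ← C_mul, mul_inv_cancel₀ hα, C_1, one_mul]
  have hβt : C (β / α) * X = C β * t := by rw [ht, div_eq_mul_inv, C_mul, mul_assoc]
  have hu : lineQuotient p α = C (α ^ p) * (t ^ p - t) := by
    rw [mul_sub, C_pow, ← mul_pow, hαt, ← C_pow, ← pow_sub_one_mul hp0 α, C_mul, mul_assoc, hαt,
      lineQuotient]
  have hβ' : C β ^ p - C β = C α * C (Rgen p e a α) := by
    rw [← C_pow, ← C_sub, hβ, C_mul]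
  set g := fgen p e (fun i => C (a i)) X (C α) with hgdef
  have hg : g ^ p - g = C α * Rgen p e (fun i => C (a i)) X + C α * t * C (Rgen p e a α) := by
    rw [hαt]; exact fgen_X_C_pow_sub_fgen_X_C hp hE
  have hαp : C (α ^ p) * C (α ^ p)⁻¹ = 1 := by
    rw [← C_mul, mul_inv_cancel₀ (pow_ne_zero p hα), C_1]
  rw [hβt, hu, quotientPoly, ← ht, ← hgdef, mul_mul_mul_comm, hαp, one_mul, C_pow]
  simpa only [hαt] using mul_eq_add_pow_sub hp hg hβ'

theorem quotientPoly_mem_frobeniusSpan (hp : p = p₀ ^ n) (he : 1 ≤ e) (hα : α ≠ 0)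
    (hβ : fgen p e a α α = 2 * β) :
    quotientPoly p e a α β ∈ frobeniusSpan p (lineQuotient p α) e := by
  have hmem : quotientPoly p e a α β ∈ frobeniusSpan p X (e + 1) := by
    have hXp : (C α⁻¹ * X) ^ p = C (α⁻¹ ^ p) * (X : K[X]) ^ p ^ 1 := by
      rw [mul_pow, C_pow, pow_one]
    have hX : C α⁻¹ * X = C α⁻¹ * (X : K[X]) ^ p ^ 0 := by rw [pow_zero, pow_one]
    rw [quotientPoly, ← smul_eq_C_mul, ← smul_eq_C_mul, hXp, hX]
    exact Submodule.smul_mem _ _ (sub_mem (Submodule.smul_mem _ _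
      (add_mem (C_mul_pow_mem_frobeniusSpan X _ (by omega))
        (C_mul_pow_mem_frobeniusSpan X _ e.succ_pos)))
      (pow_mem_frobeniusSpan hp (fgen_mem_frobeniusSpan p e a α)))
  have hgα : (fgen p e (fun i => C (a i)) X (C α)).eval α = β + β := by
    rw [← two_mul, ← hβ]
    simpa using map_fgen (evalRingHom α) p e (fun i => C (a i)) X (C α)
  refine mem_frobeniusSpan_lineQuotient_of_eval_eq_zero hp hα hmem ?_
  have hββ : (β + β) ^ p = β ^ p + β ^ p := by rw [hp, add_pow_expChar_pow]
  simp [quotientPoly, hgα, hα, hββ, mul_add]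

theorem coeff_quotientPoly (hp : p = p₀ ^ n) (hp1 : 1 < p) (h2 : (2 : K) ≠ 0) (he : 1 ≤ e)
    (hα : α ≠ 0) (hE : Egen p e a α = 0) (hβ : fgen p e a α α = 2 * β) :
    (quotientPoly p e a α β).coeff (p ^ e) =
      if 1 < e then -a e / α ^ (p - 1) else -a e / (2 * α ^ (p - 1)) := by
  have hpe : p ^ e ≠ 1 := (Nat.one_lt_pow (by omega) hp1).ne'
  have hpe' : p ^ e = p ↔ e = 1 := by simpa using (Nat.pow_right_injective hp1).eq_iff (b := 1)
  have hαp : α ^ p = α ^ (p - 1) * α := (pow_sub_one_mul (by omega) α).symm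
  have hcoeff : (quotientPoly p e a α β).coeff (p ^ e) =
      (α ^ p)⁻¹ * (β ^ p * (if e = 1 then (α ^ p)⁻¹ else 0) - α * a e) := by
    simp only [quotientPoly, mul_pow, ← C_pow, coeff_C_mul, coeff_sub, coeff_add,
      coeff_fgen_X_C_pow hp hp1 he hE, coeff_X_pow, coeff_X_of_ne_one hpe, hpe', mul_zero, add_zero,
      inv_pow, mul_ite, mul_one]
  rw [hcoeff]
  rcases he.eq_or_lt with rfl | he1
  · have hβp : 2 * β ^ p = α ^ p * (a 1 * α) := by
      have hf := fgen_one_pow hp a α α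
      rwa [hβ, hE, sub_zero, two_mul, hp, add_pow_expChar_pow, ← two_mul, ← hp] at hf
    have hβp' : β ^ p = α ^ p * (a 1 * α) / 2 := by rw [← hβp]; field_simp
    rw [if_pos rfl, if_neg (lt_irrefl 1), hβp', hαp]
    field_simp
    ring
  · rw [if_neg he1.ne', if_pos he1, hαp]
    field_simp
    ring

end Quotient

theorem statement7_general {K : Type*} [Field K] (p₀ n p e : ℕ) (hp₀ : p₀.Prime)
    (hodd : Odd p₀) [CharP K p₀] (hn : 0 < n) (hpn : p = p₀ ^ n) (a : ℕ → K) (he : 1 ≤ e)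
    (α : K) (hαV : Egen p e a α = 0) (hα0 : α ≠ 0) :
    let aP : ℕ → Polynomial K := fun i => Polynomial.C (a i)
    let β : K := fgen p e a α α / 2
    let u : Polynomial K := Polynomial.X ^ p - Polynomial.C (α ^ (p - 1)) * Polynomial.X
    let Δ₀ : Polynomial K := -(Polynomial.C α⁻¹ * Polynomial.X) *
      (Polynomial.C (β / α) * Polynomial.X - fgen p e aP Polynomial.X (Polynomial.C α))
    (∃! c : Fin e → K,
      Polynomial.X * Rgen p e aP Polynomial.X =
        u * (∑ i : Fin e, Polynomial.C (c i) * u ^ p ^ (i : ℕ)) + Δ₀ ^ p - Δ₀) ∧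
    (∀ c : Fin e → K,
      Polynomial.X * Rgen p e aP Polynomial.X =
        u * (∑ i : Fin e, Polynomial.C (c i) * u ^ p ^ (i : ℕ)) + Δ₀ ^ p - Δ₀ →
      c ⟨e - 1, by omega⟩ =
        if 1 < e then -a e / α ^ (p - 1) else -a e / (2 * α ^ (p - 1))) := by
  intro aP β u Δ₀
  have : ExpChar K p₀ := .prime hp₀
  have hp : 1 < p := hpn ▸ Nat.one_lt_pow hn.ne' hp₀.one_lt
  have h2 : (2 : K) ≠ 0 := Ring.two_ne_zero (by
    rw [ringChar.eq K p₀]; rintro rfl; exact absurd hodd (by decide))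
  have hβ : fgen p e a α α = 2 * β := (mul_div_cancel₀ _ h2).symm
  have hiff (c : Fin e → K) : X * Rgen p e aP X =
      u * (∑ i : Fin e, C (c i) * u ^ p ^ (i : ℕ)) + Δ₀ ^ p - Δ₀ ↔
        ∑ i : Fin e, C (c i) * u ^ p ^ (i : ℕ) = quotientPoly p e a α β := by
    have hu : u ≠ 0 := (monic_lineQuotient hp α).ne_zero
    rw [X_mul_Rgen_eq hpn hα0 (mk_half_fgen_mem_Hset hpn h2 hαV), sub_left_inj, add_left_inj]
    exact (mul_right_inj' hu).trans eq_comm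
  simp only [hiff]
  have hmem := quotientPoly_mem_frobeniusSpan hpn he hα0 hβ
  have hu : u.Monic := monic_lineQuotient hp α
  have hudeg : u.natDegree = p := natDegree_lineQuotient hp α
  have hu0 : u.natDegree ≠ 0 := by omega
  refine ⟨existsUnique_sum_eq_of_mem_frobeniusSpan hp hu hu0 hmem, fun c hc => ?_⟩
  obtain ⟨m, rfl⟩ := Nat.exists_eq_add_of_le' he
  have hlead := coeff_sum_C_mul_pow_pow hp hu hu0 c
  rw [hudeg, ← pow_succ, hc, coeff_quotientPoly hpn hp h2 he hα0 hαV hβ] at hlead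
  exact hlead.symm

/-- (quotient step) for `p` odd, `e ≥ 1`, `a ∈ V_R ∖ {0}`, `b := f_R(a,a)/2`,
`u(x) := x^p − a^{p−1}x`, `Δ₀(x) := −(x/a)((b/a)x − f_R(x,a))`, there is a unique additive
polynomial `R₁` of degree `p^{e−1}` with `x·R(x) = u(x)·R₁(u(x)) + Δ₀(x)^p − Δ₀(x)`, and its
leading coefficient is `−a_e/a^{p−1}` if `e > 1` and `−a_e/(2a^{p−1})` if `e = 1`. -/
theorem statement7 {F K : Type*} [Field F] [Fintype F] [Field K] [IsAlgClosed K] [Algebra F K]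
    (p₀ n p s q e : ℕ) (hp₀ : p₀.Prime) (hodd : Odd p₀) [CharP F p₀]
    (hn : 0 < n) (hpn : p = p₀ ^ n) (hs : 0 < s) (hq : q = p ^ s)
    (hcard : Fintype.card F = q) (a : ℕ → F) (hae : a e ≠ 0) (he : 1 ≤ e)
    (α : K) (hαV : Egen p e (fun i => algebraMap F K (a i)) α = 0) (hα0 : α ≠ 0) :
    let aK : ℕ → K := fun i => algebraMap F K (a i)
    let aP : ℕ → Polynomial K := fun i => Polynomial.C (aK i)
    let β : K := fgen p e aK α α / 2
    let u : Polynomial K := Polynomial.X ^ p - Polynomial.C (α ^ (p - 1)) * Polynomial.X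
    let Δ₀ : Polynomial K := -(Polynomial.C α⁻¹ * Polynomial.X) *
      (Polynomial.C (β / α) * Polynomial.X - fgen p e aP Polynomial.X (Polynomial.C α))
    (∃! c : Fin e → K,
      Polynomial.X * Rgen p e aP Polynomial.X =
        u * (∑ i : Fin e, Polynomial.C (c i) * u ^ p ^ (i : ℕ)) + Δ₀ ^ p - Δ₀) ∧
    (∀ c : Fin e → K,
      Polynomial.X * Rgen p e aP Polynomial.X =
        u * (∑ i : Fin e, Polynomial.C (c i) * u ^ p ^ (i : ℕ)) + Δ₀ ^ p - Δ₀ →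
      c ⟨e - 1, by omega⟩ =
        if 1 < e then -aK e / α ^ (p - 1) else -aK e / (2 * α ^ (p - 1))) := by
  have := charP_of_injective_algebraMap (algebraMap F K).injective p₀
  exact statement7_general p₀ n p e hp₀ hodd hn hpn _ he α hαV hα0
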